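/- arXiv:1712.07998 — 2 statements merged into one kernel-verified Lean document; each statement's English description precedes it below -/
import Mathlib

section
/- Let $k\ge 1$ and let $M_1,\ldots,M_k$ be endomorphisms of nonzero finite-dimensional complex vector spaces $E_1,\ldots,E_k$. For each $l$, let $\lambda_{l1},\ldots,\lambda_{le_l}$ be the distinct eigenvalues of $M_l$ and let $r_{lm}$ be the multiplicity of $\lambda_{lm}$ as a root of the minimal polynomial of $M_l$. Let $Q,P_1,P_2\in\mathbb{C}[x_1,\ldots,x_k]$ be such that for every tuple $(m_1,\ldots,m_k)$ with $1\le m_l\le e_l$ and every tuple $(j_1,\ldots,j_k)$ with $0\le j_l< r_{lm_l}$, $\left[\prod_{l=1}^k\partial_l^{j_l}\right]Q(\lambda_{1m_1},\ldots,\lambda_{km_k}) = \left[\prod_{l=1}^k\partial_l^{j_l}\right](P_1P_2)(\lambda_{1m_1},\ldots,\lambda_{km_k})$. Then $Q^{\otimes}(M_1,\ldots,M_k) = P_1^{\otimes}(M_1,\ldots,M_k)\circ P_2^{\otimes}(M_1,\ldots,M_k)$ as endomorphisms of $E_1\otimes\cdots\otimes E_k$. -/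
open scoped TensorProduct
open MvPolynomial

/-- `P^⊗(M₁,…,M_k) := ∑_α c_α M₁^{α₁} ⊗ ⋯ ⊗ M_k^{α_k}`, an endomorphism of `E₁ ⊗ ⋯ ⊗ E_k`. -/
noncomputable def tensorEval {k : ℕ} {E : Fin k → Type*} [∀ l, AddCommGroup (E l)]
    [∀ l, Module ℂ (E l)] (P : MvPolynomial (Fin k) ℂ) (M : ∀ l, Module.End ℂ (E l)) :
    Module.End ℂ (⨂[ℂ] l, E l) :=
  ∑ α ∈ P.support, P.coeff α • PiTensorProduct.map (fun l => (M l) ^ (α l))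

/-- The composite partial-derivative operator `∏_l ∂_l^{a l}`. -/
noncomputable def pderivComp {k : ℕ} (a : Fin k → ℕ) :
    Module.End ℂ (MvPolynomial (Fin k) ℂ) :=
  (List.ofFn fun l : Fin k =>
    (((pderiv l).toLinearMap : Module.End ℂ (MvPolynomial (Fin k) ℂ)) ^ a l)).prod

/-- `tensorEval` as an algebra homomorphism in the polynomial. -/
noncomputable def tensorEvalAlgHom {k : ℕ} {E : Fin k → Type*} [∀ l, AddCommGroup (E l)]
    [∀ l, Module ℂ (E l)] (M : ∀ l, Module.End ℂ (E l)) :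
    MvPolynomial (Fin k) ℂ →ₐ[ℂ] Module.End ℂ (⨂[ℂ] l, E l) :=
  AddMonoidAlgebra.lift ℂ (Module.End ℂ (⨂[ℂ] l, E l)) (Fin k →₀ ℕ)
    { toFun := fun α => PiTensorProduct.map (fun l => (M l) ^ (α.toAdd l))
      map_one' := by
        simp
      map_mul' := fun α β => by
        simp only [toAdd_mul, Finsupp.add_apply, pow_add]
        exact PiTensorProduct.map_mul _ _ }

theorem tensorEvalAlgHom_apply {k : ℕ} {E : Fin k → Type*} [∀ l, AddCommGroup (E l)]
    [∀ l, Module ℂ (E l)] (M : ∀ l, Module.End ℂ (E l)) (P : MvPolynomial (Fin k) ℂ) :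
    tensorEvalAlgHom M P = tensorEval P M :=
  AddMonoidAlgebra.lift_apply _ _

theorem pderiv_pow_monomial {σ R : Type*} [CommSemiring R] (i : σ) (n : ℕ) (s : σ →₀ ℕ) (a : R) :
    (((pderiv i).toLinearMap : Module.End R (MvPolynomial σ R)) ^ n) (monomial s a) =
      monomial (s - Finsupp.single i n) (a * (s i).descFactorial n) := by
  induction n with
  | zero => simp
  | succ n ih =>
    rw [pow_succ', Module.End.mul_apply, ih, Derivation.coeFn_coe, pderiv_monomial, tsub_tsub, ← Finsupp.single_add,
      Nat.descFactorial_succ]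
    simp [mul_comm, mul_left_comm]

theorem list_prod_pderiv_pow_monomial {σ R : Type*} [CommSemiring R] (j : σ → ℕ) (L : List σ)
    (hL : L.Nodup) (s : σ →₀ ℕ) (a : R) :
    (L.map fun i => ((pderiv i).toLinearMap : Module.End R (MvPolynomial σ R)) ^ j i).prod
        (monomial s a) =
      monomial (s - (L.map fun i => Finsupp.single i (j i)).sum)
        (a * (L.map fun i => ((s i).descFactorial (j i) : R)).prod) := by
  induction L with
  | nil => simp
  | cons i L ih =>
    have hi : ∀ L : List σ, i ∉ L → (L.map fun i => Finsupp.single i (j i)).sum i = 0 := by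
      intro L hL
      induction L with
      | nil => simp
      | cons b L ih =>
        simp only [List.mem_cons, not_or] at hL
        simp [ih hL.2, Finsupp.single_eq_of_ne hL.1]
    rw [List.nodup_cons] at hL
    rw [List.map_cons, List.prod_cons, Module.End.mul_apply, ih hL.2, pderiv_pow_monomial,
      Finsupp.tsub_apply, hi L hL.1, tsub_zero, tsub_tsub, List.map_cons, List.sum_cons,
      List.map_cons, List.prod_cons, add_comm, mul_assoc, mul_comm (List.prod _)]

theorem pderivComp_monomial {k : ℕ} (j : Fin k → ℕ) (s : Fin k →₀ ℕ) (a : ℂ) :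
    pderivComp j (monomial s a) =
      monomial (s - Finsupp.equivFunOnFinite.symm j)
        (a * ∏ l, ((s l).descFactorial (j l) : ℂ)) := by
  rw [pderivComp, List.ofFn_eq_map, list_prod_pderiv_pow_monomial _ _ (List.nodup_finRange k),
    ← List.ofFn_eq_map, ← List.ofFn_eq_map, List.prod_ofFn, List.sum_ofFn]
  congr 2
  ext l
  simp [Finsupp.single_apply]

theorem eval_pderivComp {k : ℕ} (x : Fin k → ℂ) (j : Fin k → ℕ) (P : MvPolynomial (Fin k) ℂ) :
    eval x (pderivComp j P) =
      ∑ α ∈ P.support, P.coeff α *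
        ∏ l, (((α l).descFactorial (j l) : ℂ) * x l ^ (α l - j l)) := by
  conv_lhs => rw [P.as_sum]
  simp only [map_sum]
  refine Finset.sum_congr rfl fun α _ => ?_
  rw [pderivComp_monomial, eval_monomial, Finsupp.prod_fintype _ _ (by simp),
    Finset.prod_mul_distrib, mul_assoc]
  simp

/-- A vector killed by a product of pairwise coprime polynomials in `f` is a sum of vectors killed
by the factors. -/
theorem exists_sum_of_aeval_prod_eq_zero {K V ι : Type*} [Field K] [AddCommGroup V] [Module K V]
    [Fintype ι] [Nonempty ι] (f : Module.End K V) (p : ι → Polynomial K)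
    (hp : Pairwise (Function.onFun IsCoprime p)) (x : V)
    (hx : Polynomial.aeval f (∏ i, p i) x = 0) :
    ∃ y : ι → V, (∀ i, Polynomial.aeval f (p i) (y i) = 0) ∧ ∑ i, y i = x := by
  classical
  obtain ⟨μ, hμ⟩ := exists_sum_eq_one_iff_pairwise_coprime'.mpr hp
  refine ⟨fun i => Polynomial.aeval f (μ i * ∏ j ∈ {i}ᶜ, p j) x, fun i => ?_, ?_⟩
  · rw [← Module.End.mul_apply, ← map_mul, mul_left_comm,
      ← Fintype.prod_eq_mul_prod_compl, map_mul, Module.End.mul_apply, hx, map_zero]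
  · rw [← LinearMap.sum_apply, ← map_sum, hμ, map_one, Module.End.one_apply]

theorem exists_sum_of_spectrum_eq_range {V : Type*} [AddCommGroup V] [Module ℂ V]
    [FiniteDimensional ℂ V] [Nontrivial V] (f : Module.End ℂ V) {n : ℕ} (lam : Fin n → ℂ)
    (hinj : Function.Injective lam) (hspec : spectrum ℂ f = Set.range lam) (x : V) :
    ∃ y : Fin n → V, (∀ m, ((f - algebraMap ℂ _ (lam m)) ^
      (minpoly ℂ f).rootMultiplicity (lam m)) (y m) = 0) ∧ ∑ m, y m = x := by
  classical
  have hne : Nonempty (Fin n) := by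
    rw [← Set.range_nonempty_iff_nonempty, ← hspec]
    exact spectrum.nonempty_of_isAlgClosed_of_finiteDimensional ℂ f
  have hmonic : (minpoly ℂ f).Monic := minpoly.monic (Algebra.IsIntegral.isIntegral f)
  have hroots : (minpoly ℂ f).roots.toFinset = Finset.univ.image lam := by
    ext a
    have : a ∈ spectrum ℂ f ↔ a ∈ Set.range lam := by rw [hspec]
    rw [← Module.End.hasEigenvalue_iff_mem_spectrum, Module.End.hasEigenvalue_iff_isRoot] at this
    simpa [Polynomial.mem_roots hmonic.ne_zero] using this
  have hprod : ∏ m, (Polynomial.X - Polynomial.C (lam m)) ^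
      (minpoly ℂ f).rootMultiplicity (lam m) = minpoly ℂ f := by
    conv_rhs => rw [(IsAlgClosed.splits (minpoly ℂ f)).eq_prod_roots_of_monic hmonic,
      Polynomial.prod_multiset_root_eq_finset_root, hroots,
      Finset.prod_image fun a _ b _ h => hinj h]
  obtain ⟨y, hy, hsum⟩ := exists_sum_of_aeval_prod_eq_zero f
    (fun m => (Polynomial.X - Polynomial.C (lam m)) ^ (minpoly ℂ f).rootMultiplicity (lam m))
    (fun a b hab => (Polynomial.pairwise_coprime_X_sub_C hinj hab).pow) x
    (by rw [hprod, minpoly.aeval, LinearMap.zero_apply])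
  exact ⟨y, fun m => by simpa using hy m, hsum⟩

/-- Taylor expansion of `f ^ n` at `c` on a vector killed by `(f - c) ^ r`. -/
theorem pow_apply_eq_sum_of_sub_pow_apply_eq_zero {K V : Type*} [Field K] [AddCommGroup V]
    [Module K V] (f : Module.End K V) (c : K) (r n : ℕ) (x : V)
    (hx : ((f - algebraMap K _ c) ^ r) x = 0) :
    (f ^ n) x = ∑ j ∈ Finset.range r,
      ((n.choose j : K) * c ^ (n - j)) • ((f - algebraMap K _ c) ^ j) x := by
  set g := f - algebraMap K (Module.End K V) c with hg
  have hf : f = g + algebraMap K _ c := by simp [hg]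
  have hvanish : ∀ j, r ≤ j → (g ^ j) x = 0 := fun j hj => by
    rw [← Nat.sub_add_cancel hj, pow_add, Module.End.mul_apply, hx, map_zero]
  have hexp : (f ^ n) x = ∑ j ∈ Finset.range (n + 1),
      ((n.choose j : K) * c ^ (n - j)) • (g ^ j) x := by
    rw [hf, (Algebra.commute_algebraMap_right c g).add_pow, LinearMap.sum_apply]
    refine Finset.sum_congr rfl fun j _ => ?_
    rw [← map_pow, ← map_natCast (algebraMap K (Module.End K V)), mul_assoc, ← map_mul,
      ← Algebra.commutes, ← Algebra.smul_def, LinearMap.smul_apply, mul_comm]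
  rw [hexp, Finset.sum_subset (Finset.range_mono (le_max_left (n + 1) r)),
    Finset.sum_subset (Finset.range_mono (le_max_right (n + 1) r))]
  · intro j _ hj
    rw [hvanish j (by simpa using hj), smul_zero]
  · intro j _ hj
    rw [Nat.choose_eq_zero_of_lt (by simpa using hj), Nat.cast_zero, zero_mul, zero_smul]

theorem tensorEval_tprod_eq_zero {k : ℕ} {E : Fin k → Type*} [∀ l, AddCommGroup (E l)]
    [∀ l, Module ℂ (E l)] (M : ∀ l, Module.End ℂ (E l)) (c : Fin k → ℂ) (r : Fin k → ℕ)
    (P : MvPolynomial (Fin k) ℂ)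
    (hP : ∀ j : Fin k → ℕ, (∀ l, j l < r l) → eval c (pderivComp j P) = 0)
    (x : ∀ l, E l) (hx : ∀ l, ((M l - algebraMap ℂ _ (c l)) ^ r l) (x l) = 0) :
    tensorEval P M (PiTensorProduct.tprod ℂ x) = 0 := by
  simp only [tensorEval, LinearMap.sum_apply, LinearMap.smul_apply, PiTensorProduct.map_tprod,
    fun (α : Fin k →₀ ℕ) l =>
      pow_apply_eq_sum_of_sub_pow_apply_eq_zero (M l) (c l) (r l) (α l) (x l) (hx l),
    MultilinearMap.map_sum_finset, MultilinearMap.map_smul_univ, Finset.smul_sum, smul_smul]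
  rw [Finset.sum_comm]
  refine Finset.sum_eq_zero fun j hj => ?_
  rw [← Finset.sum_smul]
  convert zero_smul ℂ _
  have hfact : (∏ l, ((j l).factorial : ℂ)) ≠ 0 :=
    Finset.prod_ne_zero_iff.mpr fun l _ => Nat.cast_ne_zero.mpr (j l).factorial_ne_zero
  refine (mul_eq_zero.mp ?_).resolve_left hfact
  rw [← hP j fun l => by simpa using Fintype.mem_piFinset.mp hj l, eval_pderivComp,
    Finset.mul_sum]
  refine Finset.sum_congr rfl fun α _ => ?_
  rw [mul_left_comm, ← Finset.prod_mul_distrib]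
  simp [Nat.descFactorial_eq_factorial_mul_choose, mul_assoc]

theorem stmt6 (k : ℕ) (hk : 1 ≤ k) (E : Fin k → Type*)
    [∀ l, AddCommGroup (E l)] [∀ l, Module ℂ (E l)]
    [∀ l, FiniteDimensional ℂ (E l)] [∀ l, Nontrivial (E l)]
    (M : ∀ l, Module.End ℂ (E l))
    (e : Fin k → ℕ) (lam : ∀ l, Fin (e l) → ℂ)
    (hinj : ∀ l, Function.Injective (lam l))
    (hspec : ∀ l, spectrum ℂ (M l) = Set.range (lam l))
    (r : ∀ l, Fin (e l) → ℕ)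
    (hr : ∀ l m, r l m = (minpoly ℂ (M l)).rootMultiplicity (lam l m))
    (Q P₁ P₂ : MvPolynomial (Fin k) ℂ)
    (hQ : ∀ (m : ∀ l, Fin (e l)) (jj : Fin k → ℕ), (∀ l, jj l < r l (m l)) →
      MvPolynomial.eval (fun l => lam l (m l)) (pderivComp jj Q) =
        MvPolynomial.eval (fun l => lam l (m l)) (pderivComp jj (P₁ * P₂))) :
    tensorEval Q M = tensorEval P₁ M * tensorEval P₂ M := by
  rw [← sub_eq_zero, ← tensorEvalAlgHom_apply, ← tensorEvalAlgHom_apply,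
    ← tensorEvalAlgHom_apply, ← map_mul, ← map_sub, tensorEvalAlgHom_apply]
  refine PiTensorProduct.ext (MultilinearMap.ext fun x => ?_)
  choose y hy hsum using fun l =>
    exists_sum_of_spectrum_eq_range (M l) (lam l) (hinj l) (hspec l) (x l)
  obtain rfl : (fun l => ∑ m, y l m) = x := funext hsum
  rw [LinearMap.compMultilinearMap_apply, LinearMap.compMultilinearMap_apply,
    LinearMap.zero_apply, MultilinearMap.map_sum, map_sum]
  refine Finset.sum_eq_zero fun m _ => ?_
  refine tensorEval_tprod_eq_zero M (fun l => lam l (m l)) (fun l => r l (m l)) _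
    (fun j hj => ?_) _ fun l => ?_
  · rw [map_sub, map_sub, hQ m j hj, sub_self]
  · rw [hr]
    exact hy l (m l)
end

section
/- Let $d\ge 1$, let $M$ be a $d\times d$ complex matrix, and let $\lambda_1,\ldots,\lambda_d$ be the eigenvalues of $M$ listed with algebraic multiplicity (the roots of the characteristic polynomial of $M$). Let $1\le k\le d$ and let $P\in\mathbb{C}[x_1,\ldots,x_k]$. Then $\sum_{\substack{(n_1,\ldots,n_k)\in\{1,\ldots,d\}^k\\ n_l\neq n_{l'} \text{ for } l\neq l'}} P(\lambda_{n_1},\ldots,\lambda_{n_k}) \;=\; \sum_{\sigma\in S_k} \varepsilon(\sigma)\,\mathrm{Tr}\big(P^{\otimes}(M,\ldots,M)\circ \Pi_{\sigma}\big)$, where $S_k$ is the symmetric group on $\{1,\ldots,k\}$, $\varepsilon(\sigma)$ is the signature of $\sigma$, and $\Pi_\sigma$ is the endomorphism of $(\mathbb{C}^d)^{\otimes k}$ determined by $\Pi_\sigma(v_1\otimes\cdots\otimes v_k) = v_{\sigma^{-1}(1)}\otimes\cdots\otimes v_{\sigma^{-1}(k)}$. -/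
open Polynomial

/-- `P^⊗(M₁,…,M_k)` for square matrices: the Kronecker-product evaluation,
indexed by multi-indices. -/
noncomputable def tensorEvalM {k : ℕ} {n : Fin k → ℕ} (P : MvPolynomial (Fin k) ℂ)
    (M : ∀ l, Matrix (Fin (n l)) (Fin (n l)) ℂ) :
    Matrix (∀ l, Fin (n l)) (∀ l, Fin (n l)) ℂ :=
  ∑ α ∈ P.support, P.coeff α • Matrix.of fun i j => ∏ l, (M l ^ α l) (i l) (j l)

/-- The matrix of the permutation operator `Π_σ` on `(ℂ^d)^{⊗ k}`,
`Π_σ (v₁ ⊗ ⋯ ⊗ v_k) = v_{σ⁻¹(1)} ⊗ ⋯ ⊗ v_{σ⁻¹(k)}`. -/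
def permOp (d k : ℕ) (σ : Equiv.Perm (Fin k)) :
    Matrix (Fin k → Fin d) (Fin k → Fin d) ℂ :=
  Matrix.of fun i j => if j = i ∘ σ then 1 else 0

/-- A tensor product of endomorphisms, in multi-index coordinates. -/
def piKronecker {R ι m : Type*} [CommSemiring R] [Fintype ι] (A : ι → Matrix m m R) :
    Matrix (ι → m) (ι → m) R :=
  Matrix.of fun i j => ∏ l, A l (i l) (j l)

theorem piKronecker_mul {R ι m : Type*} [CommSemiring R] [Fintype ι] [DecidableEq ι] [Fintype m]
    (A B : ι → Matrix m m R) :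
    piKronecker A * piKronecker B = piKronecker fun l => A l * B l := by
  ext i j
  simp only [piKronecker, Matrix.mul_apply, Matrix.of_apply, ← Finset.prod_mul_distrib]
  rw [Finset.prod_univ_sum, Fintype.piFinset_univ]

theorem piKronecker_one {R ι m : Type*} [CommSemiring R] [Fintype ι] [DecidableEq m] :
    piKronecker (fun _ : ι => (1 : Matrix m m R)) = 1 := by
  classical
  ext i j
  simp only [piKronecker, Matrix.of_apply, Matrix.one_apply, Finset.prod_ite_zero,
    Finset.prod_const_one, Finset.mem_univ, true_imp_iff, funext_iff]

theorem tensorEvalM_eq_sum_piKronecker {d k : ℕ} (P : MvPolynomial (Fin k) ℂ)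
    (M : Matrix (Fin d) (Fin d) ℂ) :
    tensorEvalM (n := fun _ : Fin k => d) P (fun _ => M) =
      ∑ α ∈ P.support, P.coeff α • piKronecker fun l => M ^ α l := rfl

theorem mul_permOp_apply {d k : ℕ} (A : Matrix (Fin k → Fin d) (Fin k → Fin d) ℂ)
    (σ : Equiv.Perm (Fin k)) (i j : Fin k → Fin d) :
    (A * permOp d k σ) i j = A i (j ∘ σ.symm) := by
  have h : ∀ m : Fin k → Fin d, j = m ∘ σ ↔ m = j ∘ σ.symm := fun m =>
    (Equiv.comp_symm_eq σ m j).symm.trans eq_comm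
  simp [Matrix.mul_apply, permOp, h]

theorem permOp_mul_apply {d k : ℕ} (A : Matrix (Fin k → Fin d) (Fin k → Fin d) ℂ)
    (σ : Equiv.Perm (Fin k)) (i j : Fin k → Fin d) :
    (permOp d k σ * A) i j = A (i ∘ σ) j := by
  simp [Matrix.mul_apply, permOp]

theorem trace_mul_permOp {d k : ℕ} (A : Matrix (Fin k → Fin d) (Fin k → Fin d) ℂ)
    (σ : Equiv.Perm (Fin k)) :
    (A * permOp d k σ).trace = ∑ j : Fin k → Fin d, A (j ∘ σ) j := by
  rw [Matrix.trace_mul_comm]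
  simp [Matrix.trace, permOp_mul_apply]

theorem piKronecker_const_mul_permOp {d k : ℕ} (U : Matrix (Fin d) (Fin d) ℂ)
    (σ : Equiv.Perm (Fin k)) :
    piKronecker (fun _ : Fin k => U) * permOp d k σ =
      permOp d k σ * piKronecker (fun _ : Fin k => U) := by
  ext i j
  rw [mul_permOp_apply, permOp_mul_apply]
  simp only [piKronecker, Matrix.of_apply, Function.comp_apply]
  rw [← Equiv.prod_comp σ]
  simp

theorem trace_piKronecker_conj_mul_permOp {d k : ℕ} {U V : Matrix (Fin d) (Fin d) ℂ}
    (hVU : V * U = 1) (A : Fin k → Matrix (Fin d) (Fin d) ℂ) (σ : Equiv.Perm (Fin k)) :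
    (piKronecker (fun l => U * A l * V) * permOp d k σ).trace =
      (piKronecker A * permOp d k σ).trace := by
  rw [← piKronecker_mul (fun l => U * A l) (fun _ => V), ← piKronecker_mul (fun _ => U) A,
    Matrix.mul_assoc, piKronecker_const_mul_permOp, Matrix.mul_assoc, Matrix.trace_mul_comm,
    Matrix.mul_assoc, Matrix.mul_assoc, piKronecker_mul, hVU, piKronecker_one, Matrix.mul_one]

theorem sum_sign_mul_trace_piKronecker {d k : ℕ} (A : Fin k → Matrix (Fin d) (Fin d) ℂ) :
    ∑ σ : Equiv.Perm (Fin k), ((Equiv.Perm.sign σ : ℤ) : ℂ) *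
        (piKronecker A * permOp d k σ).trace =
      ∑ j : Fin k → Fin d, (Matrix.of fun m l => A l (j m) (j l)).det := by
  simp only [trace_mul_permOp, Matrix.det_apply', Finset.mul_sum]
  rw [Finset.sum_comm]
  rfl

theorem det_of_lowerTriangular_family {R : Type*} [CommRing R] {d k : ℕ}
    {A : Fin k → Matrix (Fin d) (Fin d) R} (hA : ∀ l i j, i < j → A l i j = 0)
    {t : Fin k → Fin d} (ht : Function.Injective t) :
    (Matrix.of fun m l => A l (t m) (t l)).det = ∏ l, A l (t l) (t l) := by
  rw [Matrix.det_apply', Finset.sum_eq_single 1]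
  · simp
  · intro σ _ hσ
    suffices h : ∃ l, t (σ l) < t l by
      obtain ⟨l, hl⟩ := h
      rw [Finset.prod_eq_zero (Finset.mem_univ l) (hA l _ _ hl), mul_zero]
    by_contra! h
    refine hσ (Equiv.ext fun l => ht (Fin.ext ?_))
    have hsum : ∑ l, (t l : ℕ) = ∑ l, (t (σ l) : ℕ) :=
      (Equiv.sum_comp σ fun l => (t l : ℕ)).symm
    exact ((Finset.sum_eq_sum_iff_of_le fun l _ => Fin.le_def.mp (h l)).mp hsum l
      (Finset.mem_univ l)).symm
  · simp

theorem lowerTriangular_pow {R m : Type*} [CommRing R] [Fintype m] [LinearOrder m]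
    {T : Matrix m m R} (hT : ∀ i j, i < j → T i j = 0) (n : ℕ) :
    (∀ i j, i < j → (T ^ n) i j = 0) ∧ ∀ i, (T ^ n) i i = T i i ^ n := by
  induction n with
  | zero => exact ⟨fun i j h => by simp [h.ne], fun i => by simp⟩
  | succ n ih =>
    refine ⟨fun i j h => ?_, fun i => ?_⟩
    · rw [pow_succ, Matrix.mul_apply]
      refine Finset.sum_eq_zero fun l _ => ?_
      rcases lt_or_ge i l with hl | hl
      · rw [ih.1 i l hl, zero_mul]
      · rw [hT l j (hl.trans_lt h), mul_zero]
    · rw [pow_succ, Matrix.mul_apply, Finset.sum_eq_single i, ih.2, pow_succ]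
      · intro l _ hl
        rcases lt_or_gt_of_ne hl with hl | hl
        · rw [hT l i hl, mul_zero]
        · rw [ih.1 i l hl, zero_mul]
      · simp

theorem exists_basis_toMatrix_lowerTriangular {K : Type*} [Field K] [IsAlgClosed K] (n : ℕ) :
    ∀ {V : Type*} [AddCommGroup V] [Module K V] [FiniteDimensional K V] (f : V →ₗ[K] V),
      Module.finrank K V = n →
      ∃ b : Module.Basis (Fin n) K V, ∀ i j, i < j → LinearMap.toMatrix b b f i j = 0 := by
  induction n with
  | zero =>
    intro V _ _ _ f hV
    exact ⟨Module.finBasisOfFinrankEq K V hV, fun i => i.elim0⟩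
  | succ n ih =>
    intro V _ _ _ f hV
    have : Nontrivial V := Module.nontrivial_of_finrank_pos (R := K) (by omega)
    obtain ⟨c, hc⟩ := Module.End.exists_eigenvalue f
    have hrange : LinearMap.range (f - algebraMap K (Module.End K V) c) < ⊤ := by
      rw [lt_top_iff_ne_top, Ne, LinearMap.range_eq_top, ← LinearMap.injective_iff_surjective,
        ← LinearMap.ker_eq_bot]
      simpa [Module.End.HasEigenvalue, Module.End.HasUnifEigenvalue,
        Module.End.eigenspace_def, Algebra.algebraMap_eq_smul_one] using hc
    obtain ⟨φ, hφ, hle⟩ := Submodule.exists_le_ker_of_lt_top _ hrange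
    have hφf : ∀ x, φ (f x) = c * φ x := fun x => by
      have := hle (LinearMap.mem_range_self _ x)
      simpa [sub_eq_zero, Module.algebraMap_end_apply] using this
    have hinv : ∀ x ∈ LinearMap.ker φ, f x ∈ LinearMap.ker φ := fun x hx => by
      rw [LinearMap.mem_ker] at hx ⊢
      rw [hφf, hx, mul_zero]
    have hdim : Module.finrank K (LinearMap.ker φ) = n := by
      have := Module.Dual.finrank_ker_add_one_of_ne_zero hφ
      omega
    obtain ⟨b, hb⟩ := ih (f.restrict hinv) hdim
    obtain ⟨y, hy⟩ := DFunLike.ne_iff.mp hφ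
    replace hy : φ y ≠ 0 := hy
    let b' := Module.Basis.mkFinCons y b
      (fun a x hx h => by
        have := congrArg φ h
        simpa [LinearMap.mem_ker.mp hx, hy] using this)
      (fun z => ⟨-(φ z / φ y), by simp [hy]⟩)
    have hb' : ∀ j, b' j.succ = b j := fun j => by simp [b']
    have hrepr : ∀ w : LinearMap.ker φ,
        b'.repr w = (b.repr w).mapDomain Fin.succ := fun w => by
      have hmaps : b'.repr.toLinearMap ∘ₗ (LinearMap.ker φ).subtype =
          Finsupp.lmapDomain K K Fin.succ ∘ₗ b.repr.toLinearMap :=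
        b.ext fun j => by simp [← hb']
      exact LinearMap.congr_fun hmaps w
    refine ⟨b', fun i j => ?_⟩
    refine Fin.cases (fun h => absurd h (Fin.not_lt_zero i)) (fun j h => ?_) j
    rw [LinearMap.toMatrix_apply, hb',
      show f (b j) = (f.restrict hinv (b j) : LinearMap.ker φ) from rfl, hrepr]
    revert h
    refine Fin.cases (fun _ => ?_) (fun i h => ?_) i
    · exact Finsupp.mapDomain_of_notMem_range _ _ (by simp)
    · rw [Finsupp.mapDomain_apply (Fin.succ_injective n), ← LinearMap.toMatrix_apply]
      exact hb i j (Fin.succ_lt_succ_iff.mp h)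

theorem exists_lowerTriangular_conj {K : Type*} [Field K] [IsAlgClosed K] {d : ℕ}
    (M : Matrix (Fin d) (Fin d) K) :
    ∃ U V T : Matrix (Fin d) (Fin d) K, U * V = 1 ∧ V * U = 1 ∧ M = U * T * V ∧
      T.charpoly = M.charpoly ∧ ∀ i j, i < j → T i j = 0 := by
  obtain ⟨b, hb⟩ := exists_basis_toMatrix_lowerTriangular d (Matrix.toLin' M) (by simp)
  let e := Pi.basisFun K (Fin d)
  refine ⟨e.toMatrix b, b.toMatrix e, LinearMap.toMatrix b b (Matrix.toLin' M),
    e.toMatrix_mul_toMatrix_flip b, b.toMatrix_mul_toMatrix_flip e, ?_, ?_, hb⟩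
  · rw [basis_toMatrix_mul_linearMap_toMatrix_mul_basis_toMatrix]
    exact (LinearMap.toMatrix'_toLin' M).symm
  · rw [LinearMap.charpoly_toMatrix, Matrix.charpoly_toLin']

theorem exists_equiv_of_map_univ_val_eq {α β γ : Type*} [Fintype α] [Fintype β]
    {f : α → γ} {g : β → γ}
    (h : Finset.univ.val.map f = Finset.univ.val.map g) : ∃ e : α ≃ β, ∀ a, f a = g (e a) := by
  classical
  have hcard : ∀ c, Fintype.card {a // f a = c} = Fintype.card {b // g b = c} := fun c => by
    have hc := congrArg (Multiset.count c) h
    rw [Multiset.count_map, Multiset.count_map] at hc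
    simpa only [Fintype.card_subtype, Finset.card_def, Finset.filter_val, eq_comm (a := c)] using hc
  exact ⟨Equiv.ofFiberEquiv fun c => Fintype.equivOfCardEq (hcard c),
    fun a => (Equiv.ofFiberEquiv_map _ a).symm⟩

theorem exists_perm_diag_comp_eq {K m : Type*} [Field K] [Fintype m] [LinearOrder m]
    {T : Matrix m m K} (hT : ∀ i j, i < j → T i j = 0) {lam : m → K}
    (hlam : T.charpoly = ∏ i, (X - C (lam i))) :
    ∃ τ : Equiv.Perm m, ∀ i, lam i = T (τ i) (τ i) := by
  have hdiag : T.charpoly = ∏ i, (X - C (T i i)) := by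
    rw [← Matrix.charpoly_transpose]
    exact Matrix.charpoly_of_isUpperTriangular _ fun i j h => hT j i h
  have hroots := congrArg Polynomial.roots (hlam.symm.trans hdiag)
  rw [Polynomial.roots_prod _ _ (Finset.prod_ne_zero_iff.mpr fun i _ => X_sub_C_ne_zero _),
    Polynomial.roots_prod _ _ (Finset.prod_ne_zero_iff.mpr fun i _ => X_sub_C_ne_zero _)] at hroots
  simp only [roots_X_sub_C, Multiset.bind_singleton] at hroots
  exact exists_equiv_of_map_univ_val_eq hroots

theorem sum_sign_mul_trace_piKronecker_pow {d k : ℕ} (M : Matrix (Fin d) (Fin d) ℂ)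
    (lam : Fin d → ℂ) (hlam : M.charpoly = ∏ i, (X - C (lam i))) (α : Fin k → ℕ) :
    ∑ σ : Equiv.Perm (Fin k), ((Equiv.Perm.sign σ : ℤ) : ℂ) *
        (piKronecker (fun l => M ^ α l) * permOp d k σ).trace =
      ∑ t ∈ Finset.univ.filter (fun t : Fin k → Fin d => Function.Injective t),
        ∏ l, lam (t l) ^ α l := by
  obtain ⟨U, V, T, hUV, hVU, rfl, hchar, hT⟩ := exists_lowerTriangular_conj M
  obtain ⟨τ, hτ⟩ := exists_perm_diag_comp_eq hT (hchar.trans hlam)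
  have hpow : ∀ n : ℕ, (U * T * V) ^ n = U * T ^ n * V := fun n =>
    Units.conj_pow (⟨U, V, hUV, hVU⟩ : (Matrix (Fin d) (Fin d) ℂ)ˣ) T n
  simp only [hpow, trace_piKronecker_conj_mul_permOp hVU]
  rw [sum_sign_mul_trace_piKronecker, Finset.sum_filter,
    ← (Equiv.arrowCongr (Equiv.refl (Fin k)) τ).sum_comp]
  refine Finset.sum_congr rfl fun t _ => ?_
  split_ifs with ht
  · refine (det_of_lowerTriangular_family (fun l => (lowerTriangular_pow hT (α l)).1)
      (τ.injective.comp ht)).trans (Finset.prod_congr rfl fun l _ => ?_)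
    rw [(lowerTriangular_pow hT (α l)).2, hτ]
    rfl
  · simp only [Function.Injective, not_forall] at ht
    obtain ⟨a, c, hac, hne⟩ := ht
    exact Matrix.det_zero_of_row_eq hne (funext fun l => by simp [hac])

/-- sums of `P` over pairwise-distinct tuples of eigenvalues
are computed by the signed traces against permutation operators. -/
theorem stmt18 (d : ℕ) (hd : 1 ≤ d) (M : Matrix (Fin d) (Fin d) ℂ)
    (lam : Fin d → ℂ) (hlam : M.charpoly = ∏ i, (X - C (lam i)))
    (k : ℕ) (hk : 1 ≤ k) (hkd : k ≤ d) (P : MvPolynomial (Fin k) ℂ) :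
    ∑ t ∈ Finset.univ.filter (fun t : Fin k → Fin d => Function.Injective t),
        MvPolynomial.eval (fun l => lam (t l)) P =
      ∑ σ : Equiv.Perm (Fin k), ((Equiv.Perm.sign σ : ℤ) : ℂ) *
        Matrix.trace
          (tensorEvalM (n := fun _ : Fin k => d) P (fun _ => M) * permOp d k σ) := by
  simp only [tensorEvalM_eq_sum_piKronecker, MvPolynomial.eval_eq', Finset.sum_mul,
    Matrix.trace_sum, Matrix.smul_mul, Matrix.trace_smul, smul_eq_mul, Finset.mul_sum,
    mul_left_comm _ (MvPolynomial.coeff _ P)]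
  rw [Finset.sum_comm, Finset.sum_comm (s := Finset.univ (α := Equiv.Perm (Fin k)))]
  refine Finset.sum_congr rfl fun α _ => ?_
  rw [← Finset.mul_sum, ← Finset.mul_sum, sum_sign_mul_trace_piKronecker_pow M lam hlam]
end
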